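/- Let 0 < α < 1, let U be an open subset of ℂ, let E ⊆ ℂ be a set whose (1+α)-dimensional Hausdorff measure is zero, and let f : ℂ → ℂ be Hölder continuous of exponent α on U (i.e., ‖f(x) − f(y)‖ ≤ C·‖x − y‖^α for some constant C ≥ 0 and all x, y ∈ U) and complex differentiable at every point of U \ E (differentiability within U \ E). Then f is complex differentiable at every point of U. -/

import Mathlib

/-!
By Morera's theorem it suffices that the integral of `f` along the boundary of every rectangle in
`U` vanishes. Following Goursat, a bound `‖∮_Q f‖ ≤ ν Q` by a measure `ν` passes from the two halves
of a rectangle to the whole, so by bisection it only has to be checked, around each point, on the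
rectangles of one generation. Fix `ε > 0`, cover `E` by balls `B(xᵢ, rᵢ)` with `∑ rᵢ ^ (1 + α) ≤ ε`,
and let `ν` have density `ε + C ∑ rᵢ ^ (α - 1) 1_{B(xᵢ, 3 rᵢ)}`, up to a factor. Around a point
outside `E`, differentiability gives `‖∮_Q f‖ ≤ ε (diam Q)²` on small rectangles. Around a point of
`B(xᵢ, rᵢ)`, take the generation whose diameter is comparable to `rᵢ`: Hölder continuity gives
`‖∮_Q f‖ ≲ C (diam Q) ^ (1 + α) ≲ C rᵢ ^ (α - 1) (diam Q)²`. Bisection preserves the shape of a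
rectangle, so `(diam Q)²` is proportional to its area, and the total mass of `ν` is `O(ε)`.
-/

open MeasureTheory Measure Set Metric Complex Module
open scoped ENNReal NNReal Interval

namespace HolderRemovability

/-! ### Bisection of rectangles -/

section Rectangle

variable {a b x y z w : ℂ} {m : ℝ}

lemma rectangle_comm (z w : ℂ) : Rectangle z w = Rectangle w z := by
  rw [Rectangle, Rectangle, uIcc_comm z.re, uIcc_comm z.im]

lemma isCompact_rectangle (z w : ℂ) : IsCompact (Rectangle z w) :=
  isCompact_uIcc.reProdIm isCompact_uIcc

lemma rectangle_nonempty (z w : ℂ) : (Rectangle z w).Nonempty :=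
  ⟨z, left_mem_uIcc, left_mem_uIcc⟩

lemma ofReal_add_mul_I_mem_rectangle {s t : ℝ} (hs : s ∈ [[a.re, b.re]]) (ht : t ∈ [[a.im, b.im]]) :
    (s + t * I : ℂ) ∈ Rectangle a b := by
  simpa [Rectangle, mem_reProdIm] using And.intro hs ht

lemma norm_sub_le_of_mem_rectangle (hx : x ∈ Rectangle a b) (hy : y ∈ Rectangle a b) :
    ‖x - y‖ ≤ ‖b - a‖ := by
  have hre : |(x - y).re| ≤ |(b - a).re| :=
    abs_sub_le_of_uIcc_subset_uIcc (uIcc_subset_uIcc hy.1 hx.1)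
  have him : |(x - y).im| ≤ |(b - a).im| :=
    abs_sub_le_of_uIcc_subset_uIcc (uIcc_subset_uIcc hy.2 hx.2)
  rw [norm_eq_sqrt_sq_add_sq, norm_eq_sqrt_sq_add_sq]
  exact Real.sqrt_le_sqrt (add_le_add (sq_le_sq.2 hre) (sq_le_sq.2 him))

lemma rectangle_subset_closedBall (hx : x ∈ Rectangle a b) :
    Rectangle a b ⊆ closedBall x ‖b - a‖ := fun _ hy =>
  mem_closedBall_iff_norm.2 (norm_sub_le_of_mem_rectangle hy hx)

lemma rectangle_left_subset (hm : m ∈ [[a.re, b.re]]) : Rectangle a ⟨m, b.im⟩ ⊆ Rectangle a b :=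
  fun _ hx => ⟨uIcc_subset_uIcc_left hm hx.1, hx.2⟩

lemma rectangle_right_subset (hm : m ∈ [[a.re, b.re]]) : Rectangle ⟨m, a.im⟩ b ⊆ Rectangle a b :=
  fun _ hx => ⟨uIcc_subset_uIcc_right hm hx.1, hx.2⟩

lemma rectangle_lower_subset (hm : m ∈ [[a.im, b.im]]) : Rectangle a ⟨b.re, m⟩ ⊆ Rectangle a b :=
  fun _ hx => ⟨hx.1, uIcc_subset_uIcc_left hm hx.2⟩

lemma rectangle_upper_subset (hm : m ∈ [[a.im, b.im]]) : Rectangle ⟨a.re, m⟩ b ⊆ Rectangle a b :=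
  fun _ hx => ⟨hx.1, uIcc_subset_uIcc_right hm hx.2⟩

end Rectangle

section Bisection

variable {p : ℂ → ℂ → Prop} {z w : ℂ}

lemma midpoint_mem_uIcc (s t : ℝ) : (s + t) / 2 ∈ [[s, t]] := by
  rw [mem_uIcc]; grind

lemma exists_quarter_rectangle_not {a b : ℂ}
    (hre : ∀ c d, Rectangle c d ⊆ Rectangle a b → ∀ m ∈ [[c.re, d.re]],
      p c ⟨m, d.im⟩ → p ⟨m, c.im⟩ d → p c d)
    (him : ∀ c d, Rectangle c d ⊆ Rectangle a b → ∀ m ∈ [[c.im, d.im]],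
      p c ⟨d.re, m⟩ → p ⟨c.re, m⟩ d → p c d)
    (hp : ¬ p a b) :
    ∃ c d, Rectangle c d ⊆ Rectangle a b ∧ d - c = (b - a) / 2 ∧ ¬ p c d := by
  by_contra! hquarter
  set m := (a.re + b.re) / 2
  set n := (a.im + b.im) / 2
  have hm' : m ∈ [[a.re, b.re]] := midpoint_mem_uIcc _ _
  have hn' : n ∈ [[a.im, b.im]] := midpoint_mem_uIcc _ _
  have left := rectangle_left_subset hm'
  have right := rectangle_right_subset hm'
  have hhalf {c d : ℂ} (hre : d.re - c.re = (b.re - a.re) / 2)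
      (him : d.im - c.im = (b.im - a.im) / 2) : d - c = (b - a) / 2 :=
    Complex.ext (by simpa using hre) (by simpa using him)
  have hleft : p a ⟨m, b.im⟩ := him a ⟨m, b.im⟩ left n hn'
    (hquarter _ _ ((rectangle_lower_subset (b := ⟨m, b.im⟩) hn').trans left)
      (hhalf (by grind) (by grind)))
    (hquarter _ _ ((rectangle_upper_subset (b := ⟨m, b.im⟩) hn').trans left)
      (hhalf (by grind) (by grind)))
  have hright : p ⟨m, a.im⟩ b := him ⟨m, a.im⟩ b right n hn'
    (hquarter _ _ ((rectangle_lower_subset (a := ⟨m, a.im⟩) hn').trans right)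
      (hhalf (by grind) (by grind)))
    (hquarter _ _ ((rectangle_upper_subset (a := ⟨m, a.im⟩) hn').trans right)
      (hhalf (by grind) (by grind)))
  exact hp (hre a b subset_rfl m hm' hleft hright)

theorem rectangle_bisection_induction
    (hre : ∀ a b, Rectangle a b ⊆ Rectangle z w → ∀ m ∈ [[a.re, b.re]],
      p a ⟨m, b.im⟩ → p ⟨m, a.im⟩ b → p a b)
    (him : ∀ a b, Rectangle a b ⊆ Rectangle z w → ∀ m ∈ [[a.im, b.im]],
      p a ⟨b.re, m⟩ → p ⟨a.re, m⟩ b → p a b)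
    (hloc : ∀ x ∈ Rectangle z w, ∃ n : ℕ, ∀ a b, x ∈ Rectangle a b →
      Rectangle a b ⊆ Rectangle z w → b - a = (w - z) / 2 ^ n → p a b) :
    p z w := by
  by_contra hp
  let Bad := {q : ℂ × ℂ // Rectangle q.1 q.2 ⊆ Rectangle z w ∧ ¬ p q.1 q.2}
  have hstep (q : Bad) : ∃ r : Bad, Rectangle r.1.1 r.1.2 ⊆ Rectangle q.1.1 q.1.2 ∧
      r.1.2 - r.1.1 = (q.1.2 - q.1.1) / 2 := by
    obtain ⟨⟨a, b⟩, hab, hnot⟩ := q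
    obtain ⟨c, d, hcd, hdiag, hnot'⟩ := exists_quarter_rectangle_not
      (fun c d h => hre c d (h.trans hab)) (fun c d h => him c d (h.trans hab)) hnot
    exact ⟨⟨(c, d), hcd.trans hab, hnot'⟩, hcd, hdiag⟩
  choose quarter hsub hdiag using hstep
  let q (n : ℕ) : Bad := quarter^[n] ⟨(z, w), subset_rfl, hp⟩
  have hsucc (n : ℕ) : q (n + 1) = quarter (q n) := Function.iterate_succ_apply' _ _ _
  have hq (n : ℕ) : (q n).1.2 - (q n).1.1 = (w - z) / 2 ^ n := by
    induction n with
    | zero => simp [q]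
    | succ n ih => rw [hsucc, hdiag, ih, pow_succ, div_div]
  obtain ⟨x, hx⟩ := IsCompact.nonempty_iInter_of_sequence_nonempty_isCompact_isClosed
    (fun n => Rectangle (q n).1.1 (q n).1.2) (fun n => by rw [hsucc]; exact hsub (q n))
    (fun n => rectangle_nonempty _ _) (isCompact_rectangle _ _)
    (fun n => (isCompact_rectangle _ _).isClosed)
  rw [mem_iInter] at hx
  obtain ⟨n, hn⟩ := hloc x (hx 0)
  exact (q n).2.2 (hn _ _ (hx n) (q n).2.1 (hq n))

end Bisection

section HalfOpenRectangle

/-- The rectangle with opposite corners `z` and `w`, without its left and lower sides, so that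
cutting it along a line gives disjoint pieces. -/
def halfOpenRectangle (z w : ℂ) : Set ℂ := Ι z.re w.re ×ℂ Ι z.im w.im

variable {a b : ℂ} {m : ℝ}

lemma halfOpenRectangle_subset_rectangle (z w : ℂ) : halfOpenRectangle z w ⊆ Rectangle z w :=
  fun _ hx => ⟨uIoc_subset_uIcc hx.1, uIoc_subset_uIcc hx.2⟩

lemma measurableSet_halfOpenRectangle (z w : ℂ) : MeasurableSet (halfOpenRectangle z w) :=
  (measurable_re measurableSet_uIoc).inter (measurable_im measurableSet_uIoc)

lemma volume_halfOpenRectangle (z w : ℂ) :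
    volume (halfOpenRectangle z w) = ENNReal.ofReal (|(w - z).re| * |(w - z).im|) := by
  rw [ENNReal.ofReal_mul (abs_nonneg _), sub_re, sub_im, ← Real.volume_uIoc, ← Real.volume_uIoc,
    ← Measure.prod_prod, ← Measure.volume_eq_prod,
    ← volume_preserving_equiv_real_prod.measure_preimage
      (measurableSet_uIoc.prod measurableSet_uIoc).nullMeasurableSet]
  rfl

lemma measure_halfOpenRectangle_add_re (ν : Measure ℂ) (hm : m ∈ [[a.re, b.re]]) :
    ν (halfOpenRectangle a ⟨m, b.im⟩) + ν (halfOpenRectangle ⟨m, a.im⟩ b) =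
      ν (halfOpenRectangle a b) := by
  rw [← measure_union _ (measurableSet_halfOpenRectangle _ _)]
  · congr 1
    ext x
    simp only [halfOpenRectangle, mem_union, mem_reProdIm, mem_uIoc]
    grind [mem_uIcc]
  · refine Set.disjoint_left.2 fun x => ?_
    simp only [halfOpenRectangle, mem_reProdIm, mem_uIoc]
    grind [mem_uIcc]

lemma measure_halfOpenRectangle_add_im (ν : Measure ℂ) (hm : m ∈ [[a.im, b.im]]) :
    ν (halfOpenRectangle a ⟨b.re, m⟩) + ν (halfOpenRectangle ⟨a.re, m⟩ b) =
      ν (halfOpenRectangle a b) := by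
  rw [← measure_union _ (measurableSet_halfOpenRectangle _ _)]
  · congr 1
    ext x
    simp only [halfOpenRectangle, mem_union, mem_reProdIm, mem_uIoc]
    grind [mem_uIcc]
  · refine Set.disjoint_left.2 fun x => ?_
    simp only [halfOpenRectangle, mem_reProdIm, mem_uIoc]
    grind [mem_uIcc]

end HalfOpenRectangle

/-! ### Integrals along the boundary of a rectangle -/

section RectangleIntegral

variable {F : Type*} [NormedAddCommGroup F] {f g : ℂ → F} {a b z w : ℂ} {m : ℝ}

lemma intervalIntegrable_horizontal (hf : ContinuousOn f (Rectangle a b)) {y : ℝ}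
    (hy : y ∈ [[a.im, b.im]]) :
    IntervalIntegrable (fun x : ℝ => f (x + y * I)) volume a.re b.re :=
  (hf.comp (by fun_prop) fun _ hx => ofReal_add_mul_I_mem_rectangle hx hy).intervalIntegrable

lemma intervalIntegrable_vertical (hf : ContinuousOn f (Rectangle a b)) {x : ℝ}
    (hx : x ∈ [[a.re, b.re]]) :
    IntervalIntegrable (fun y : ℝ => f (x + y * I)) volume a.im b.im :=
  (hf.comp (by fun_prop) fun _ hy => ofReal_add_mul_I_mem_rectangle hx hy).intervalIntegrable

variable [NormedSpace ℂ F]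

/-- The integral of `f` along the boundary of the rectangle with opposite corners `z` and `w`,
starting from `z` in the horizontal direction; the orientation is thus positive when
`(w - z).re` and `(w - z).im` have the same sign. -/
noncomputable def rectangleIntegral (f : ℂ → F) (z w : ℂ) : F :=
  wedgeIntegral z w f + wedgeIntegral w z f

lemma rectangleIntegral_eq (f : ℂ → F) (z w : ℂ) :
    rectangleIntegral f z w =
      (∫ x : ℝ in z.re..w.re, f (x + z.im * I)) - (∫ x : ℝ in z.re..w.re, f (x + w.im * I)) +
        I • (∫ y : ℝ in z.im..w.im, f (w.re + y * I)) -
        I • (∫ y : ℝ in z.im..w.im, f (z.re + y * I)) :=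
  wedgeIntegral_add_wedgeIntegral_eq z w f

lemma isConservativeOn_iff_rectangleIntegral_eq_zero {U : Set ℂ} :
    IsConservativeOn f U ↔ ∀ z w, Rectangle z w ⊆ U → rectangleIntegral f z w = 0 := by
  simp only [IsConservativeOn, rectangleIntegral, add_eq_zero_iff_eq_neg]

lemma rectangleIntegral_eq_zero_of_re_eq (f : ℂ → F) (h : z.re = w.re) :
    rectangleIntegral f z w = 0 := by
  simp [rectangleIntegral_eq, h]

lemma rectangleIntegral_eq_zero_of_im_eq (f : ℂ → F) (h : z.im = w.im) :
    rectangleIntegral f z w = 0 := by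
  simp [rectangleIntegral_eq, h]

lemma rectangleIntegral_add_re (hf : ContinuousOn f (Rectangle a b)) (hm : m ∈ [[a.re, b.re]]) :
    rectangleIntegral f a ⟨m, b.im⟩ + rectangleIntegral f ⟨m, a.im⟩ b =
      rectangleIntegral f a b := by
  have hsplit {y : ℝ} (hy : y ∈ [[a.im, b.im]]) :
      (∫ x : ℝ in a.re..m, f (x + y * I)) + (∫ x : ℝ in m..b.re, f (x + y * I)) =
        ∫ x : ℝ in a.re..b.re, f (x + y * I) :=
    have hint := intervalIntegrable_horizontal hf hy
    intervalIntegral.integral_add_adjacent_intervals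
      (hint.mono_set (uIcc_subset_uIcc_left hm)) (hint.mono_set (uIcc_subset_uIcc_right hm))
  simp only [rectangleIntegral_eq, ← hsplit left_mem_uIcc, ← hsplit right_mem_uIcc]
  abel

lemma rectangleIntegral_add_im (hf : ContinuousOn f (Rectangle a b)) (hm : m ∈ [[a.im, b.im]]) :
    rectangleIntegral f a ⟨b.re, m⟩ + rectangleIntegral f ⟨a.re, m⟩ b =
      rectangleIntegral f a b := by
  have hsplit {x : ℝ} (hx : x ∈ [[a.re, b.re]]) :
      (∫ y : ℝ in a.im..m, f (x + y * I)) + (∫ y : ℝ in m..b.im, f (x + y * I)) =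
        ∫ y : ℝ in a.im..b.im, f (x + y * I) :=
    have hint := intervalIntegrable_vertical hf hx
    intervalIntegral.integral_add_adjacent_intervals
      (hint.mono_set (uIcc_subset_uIcc_left hm)) (hint.mono_set (uIcc_subset_uIcc_right hm))
  simp only [rectangleIntegral_eq, ← hsplit left_mem_uIcc, ← hsplit right_mem_uIcc, smul_add]
  abel

lemma rectangleIntegral_sub (hf : ContinuousOn f (Rectangle z w))
    (hg : ContinuousOn g (Rectangle z w)) :
    rectangleIntegral (fun x => f x - g x) z w =
      rectangleIntegral f z w - rectangleIntegral g z w := by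
  have horizontal {y : ℝ} (hy : y ∈ [[z.im, w.im]]) := intervalIntegral.integral_sub
    (intervalIntegrable_horizontal hf hy) (intervalIntegrable_horizontal hg hy)
  have vertical {x : ℝ} (hx : x ∈ [[z.re, w.re]]) := intervalIntegral.integral_sub
    (intervalIntegrable_vertical hf hx) (intervalIntegrable_vertical hg hx)
  simp only [rectangleIntegral_eq, horizontal left_mem_uIcc, horizontal right_mem_uIcc,
    vertical left_mem_uIcc, vertical right_mem_uIcc, smul_sub]
  abel

lemma norm_wedgeIntegral_le {M : ℝ} (hM : ∀ x ∈ Rectangle z w, ‖f x‖ ≤ M) :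
    ‖wedgeIntegral z w f‖ ≤ 2 * M * ‖w - z‖ := by
  have hM0 : 0 ≤ M := (norm_nonneg _).trans (hM _ (rectangle_nonempty z w).some_mem)
  have horizontal : ‖∫ x : ℝ in z.re..w.re, f (x + z.im * I)‖ ≤ M * |w.re - z.re| :=
    intervalIntegral.norm_integral_le_of_norm_le_const fun x hx =>
      hM _ (ofReal_add_mul_I_mem_rectangle (uIoc_subset_uIcc hx) left_mem_uIcc)
  have vertical : ‖∫ y : ℝ in z.im..w.im, f (w.re + y * I)‖ ≤ M * |w.im - z.im| :=
    intervalIntegral.norm_integral_le_of_norm_le_const fun y hy =>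
      hM _ (ofReal_add_mul_I_mem_rectangle right_mem_uIcc (uIoc_subset_uIcc hy))
  calc ‖wedgeIntegral z w f‖ ≤ M * |(w - z).re| + M * |(w - z).im| :=
        norm_add_le_of_le horizontal (by rwa [norm_smul, norm_I, one_mul])
    _ ≤ M * ‖w - z‖ + M * ‖w - z‖ := by
        gcongr
        exacts [abs_re_le_norm _, abs_im_le_norm _]
    _ = 2 * M * ‖w - z‖ := by ring

lemma norm_rectangleIntegral_le {M : ℝ} (hM : ∀ x ∈ Rectangle z w, ‖f x‖ ≤ M) :
    ‖rectangleIntegral f z w‖ ≤ 4 * M * ‖w - z‖ :=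
  calc ‖rectangleIntegral f z w‖ ≤ 2 * M * ‖w - z‖ + 2 * M * ‖z - w‖ :=
        norm_add_le_of_le (norm_wedgeIntegral_le hM)
          (norm_wedgeIntegral_le (by rwa [rectangle_comm]))
    _ = 4 * M * ‖w - z‖ := by rw [norm_sub_rev z w]; ring

lemma norm_rectangleIntegral_le_of_norm_sub_le (hf : ContinuousOn f (Rectangle z w))
    (hg : DifferentiableOn ℂ g (Rectangle z w)) {M : ℝ}
    (hM : ∀ x ∈ Rectangle z w, ‖f x - g x‖ ≤ M) :
    ‖rectangleIntegral f z w‖ ≤ 4 * M * ‖w - z‖ := by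
  have hg0 : rectangleIntegral g z w = 0 :=
    isConservativeOn_iff_rectangleIntegral_eq_zero.1 hg.isConservativeOn z w subset_rfl
  simpa [rectangleIntegral_sub hf hg.continuousOn, hg0] using norm_rectangleIntegral_le hM

lemma norm_rectangleIntegral_le_of_holderOnWith {C α : ℝ≥0} (hα : 0 < α)
    (hf : HolderOnWith C α f (Rectangle z w)) :
    ‖rectangleIntegral f z w‖ ≤ 4 * (C * ‖w - z‖ ^ (α : ℝ)) * ‖w - z‖ := by
  refine norm_rectangleIntegral_le_of_norm_sub_le (g := fun _ => f z) (hf.continuousOn hα)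
    (differentiableOn_const _) fun x hx => ?_
  have hz : z ∈ Rectangle z w := ⟨left_mem_uIcc, left_mem_uIcc⟩
  rw [← dist_eq_norm]
  refine hf.dist_le_of_le hx hz ?_
  rw [dist_eq_norm]
  exact norm_sub_le_of_mem_rectangle hx hz

lemma exists_norm_rectangleIntegral_le_mul_sq {x : ℂ} (hf : DifferentiableAt ℂ f x) {ε : ℝ}
    (hε : 0 < ε) :
    ∃ δ > 0, ∀ a b, x ∈ Rectangle a b → ContinuousOn f (Rectangle a b) → ‖b - a‖ < δ →
      ‖rectangleIntegral f a b‖ ≤ ε * ‖b - a‖ ^ 2 := by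
  obtain ⟨f', hf'⟩ := hf
  obtain ⟨δ, hδ, hTaylor⟩ := Metric.eventually_nhds_iff.1
    (hf'.isLittleO.def (show 0 < ε / 4 by positivity))
  refine ⟨δ, hδ, fun a b hx hcont hab => ?_⟩
  have happrox : ∀ y ∈ Rectangle a b, ‖f y - (f x + f' (y - x))‖ ≤ ε / 4 * ‖b - a‖ := by
    intro y hy
    have hyx : ‖y - x‖ ≤ ‖b - a‖ := norm_sub_le_of_mem_rectangle hy hx
    rw [← sub_sub]
    exact (hTaylor (by rw [dist_eq_norm]; exact hyx.trans_lt hab)).trans (by gcongr)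
  calc ‖rectangleIntegral f a b‖ ≤ 4 * (ε / 4 * ‖b - a‖) * ‖b - a‖ :=
        norm_rectangleIntegral_le_of_norm_sub_le hcont (by fun_prop) happrox
    _ = ε * ‖b - a‖ ^ 2 := by ring

theorem enorm_rectangleIntegral_le_measure {ν : Measure ℂ} (hf : ContinuousOn f (Rectangle z w))
    (hloc : ∀ x ∈ Rectangle z w, ∃ n : ℕ, ∀ a b, x ∈ Rectangle a b →
      Rectangle a b ⊆ Rectangle z w → b - a = (w - z) / 2 ^ n →
        ‖rectangleIntegral f a b‖ₑ ≤ ν (halfOpenRectangle a b)) :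
    ‖rectangleIntegral f z w‖ₑ ≤ ν (halfOpenRectangle z w) := by
  refine rectangle_bisection_induction
    (p := fun a b => ‖rectangleIntegral f a b‖ₑ ≤ ν (halfOpenRectangle a b))
    (fun a b hab m hm left right => ?_) (fun a b hab m hm lower upper => ?_) hloc
  · rw [← rectangleIntegral_add_re (hf.mono hab) hm, ← measure_halfOpenRectangle_add_re ν hm]
    exact (enorm_add_le _ _).trans (add_le_add left right)
  · rw [← rectangleIntegral_add_im (hf.mono hab) hm, ← measure_halfOpenRectangle_add_im ν hm]
    exact (enorm_add_le _ _).trans (add_le_add lower upper)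

end RectangleIntegral

/-! ### Sets of Hausdorff measure zero -/

section HausdorffCover

variable {X : Type*} [MeasurableSpace X] {s : ℝ}

lemma exists_cover_tsum_ediam_rpow_lt [EMetricSpace X] [BorelSpace X] (hs : 0 < s) {E : Set X}
    (hE : μH[s] E = 0) {δ η : ℝ≥0∞} (hδ : 0 < δ) (hη : 0 < η) :
    ∃ t : ℕ → Set X, E ⊆ ⋃ i, t i ∧ (∀ i, ediam (t i) ≤ δ) ∧ ∑' i, ediam (t i) ^ s < η := by
  have hinf : (⨅ (t : ℕ → Set X) (_ : E ⊆ ⋃ i, t i) (_ : ∀ i, ediam (t i) ≤ δ),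
      ∑' i, ⨆ _ : (t i).Nonempty, ediam (t i) ^ s) < η := by
    rw [hausdorffMeasure_apply] at hE
    exact (le_iSup₂_of_le δ hδ le_rfl).trans_lt (hE.trans_lt hη)
  simp only [iInf_lt_iff] at hinf
  obtain ⟨t, hcover, hdiam, hsum⟩ := hinf
  refine ⟨t, hcover, hdiam, (ENNReal.tsum_le_tsum fun i => ?_).trans_lt hsum⟩
  obtain hempty | hne := (t i).eq_empty_or_nonempty
  · simp [hempty, hs]
  · exact le_iSup_of_le hne le_rfl

variable [MetricSpace X] [BorelSpace X] [Nonempty X]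

lemma exists_cover_closedBall_tsum_rpow_le (hs : 0 < s) {E : Set X} (hE : μH[s] E = 0)
    {η : ℝ≥0∞} (hη : η ≠ 0) :
    ∃ (x : ℕ → X) (r : ℕ → ℝ), (∀ i, 0 < r i) ∧ E ⊆ ⋃ i, closedBall (x i) (r i) ∧
      ∑' i, ENNReal.ofReal (r i ^ s) ≤ η := by
  have hhalf : 0 < η / 2 := ENNReal.half_pos hη
  obtain ⟨t, hcover, hdiam, hsum⟩ := exists_cover_tsum_ediam_rpow_lt hs hE one_pos hhalf
  -- The summable `δ i` keep the radii positive even where `t i` has diameter zero.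
  obtain ⟨δ, hδ, hδsum⟩ := ENNReal.exists_pos_sum_of_countable hhalf.ne' ℕ
  let ρ (i : ℕ) : ℝ≥0∞ := (ediam (t i) ^ s + δ i) ^ s⁻¹
  have hρ (i : ℕ) : ρ i ^ s = ediam (t i) ^ s + δ i := ENNReal.rpow_inv_rpow hs.ne' _
  have hρ_pos (i : ℕ) : 0 < ρ i :=
    ENNReal.rpow_pos_of_nonneg (by simp [hδ i]) (inv_nonneg.2 hs.le)
  have hρ_top (i : ℕ) : ρ i ≠ ∞ := by
    have := ne_top_of_le_ne_top ENNReal.one_ne_top (hdiam i)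
    finiteness
  have hdiam_le (i : ℕ) : ediam (t i) ≤ ρ i :=
    (ENNReal.rpow_le_rpow_iff hs).1 (le_self_add.trans_eq (hρ i).symm)
  choose x hx using fun i => show ∃ x, (t i).Nonempty → x ∈ t i by
    by_cases h : (t i).Nonempty
    exacts [⟨h.some, fun h => h.some_mem⟩, ⟨Classical.arbitrary X, fun h' => absurd h' h⟩]
  refine ⟨x, fun i => (ρ i).toReal, fun i => ENNReal.toReal_pos (hρ_pos i).ne' (hρ_top i),
    hcover.trans (iUnion_mono fun i y hy => ?_), ?_⟩
  · rw [mem_closedBall, ← edist_le_ofReal ENNReal.toReal_nonneg, ENNReal.ofReal_toReal (hρ_top i)]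
    exact (edist_le_ediam_of_mem hy (hx i ⟨y, hy⟩)).trans (hdiam_le i)
  · calc ∑' i, ENNReal.ofReal ((ρ i).toReal ^ s) = ∑' i, (ediam (t i) ^ s + δ i) := by
          congr! 2 with i
          rw [← hρ i, ENNReal.toReal_rpow, ENNReal.ofReal_toReal]
          have := hρ_top i
          finiteness
      _ = ∑' i, ediam (t i) ^ s + ∑' i, (δ i : ℝ≥0∞) := ENNReal.tsum_add
      _ ≤ η / 2 + η / 2 := add_le_add hsum.le hδsum.le
      _ = η := ENNReal.add_halves η

end HausdorffCover

section GaugeMeasure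

variable {V : Type*} [NormedAddCommGroup V] [NormedSpace ℝ V] [FiniteDimensional ℝ V]
  [MeasurableSpace V] [BorelSpace V] (μ : Measure V) [μ.IsAddHaarMeasure]
  {s R r : ℝ}

lemma exists_nat_le_div_two_pow_le (hr : 0 < r) (hrR : r ≤ R) :
    ∃ n : ℕ, r ≤ R / 2 ^ n ∧ R / 2 ^ n ≤ 2 * r := by
  obtain ⟨n, hle, hlt⟩ := exists_nat_pow_near ((one_le_div hr).2 hrR) one_lt_two
  refine ⟨n, ?_, ?_⟩
  · rwa [le_div_comm₀ hr (by positivity)]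
  · rw [div_lt_iff₀ hr, pow_succ] at hlt
    rw [div_le_iff₀ (by positivity)]
    linarith

lemma rpow_sub_natCast_le_of_le_of_le {t : ℝ} (hs : 0 ≤ s) (d : ℕ) (hr : 0 < r) (hrt : r ≤ t)
    (htr : t ≤ 2 * r) : t ^ (s - d) ≤ 2 ^ s * r ^ (s - d) := by
  have ht : 0 < t := hr.trans_le hrt
  rw [Real.rpow_sub_natCast ht.ne', Real.rpow_sub_natCast hr.ne', ← mul_div_assoc,
    ← Real.mul_rpow two_pos.le hr.le]
  gcongr

lemma ofReal_rpow_mul_addHaar_closedBall (x : V) (hr : 0 < r) :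
    ENNReal.ofReal (2 ^ s * r ^ (s - finrank ℝ V)) * μ (closedBall x (3 * r)) =
      ENNReal.ofReal (2 ^ s * 3 ^ finrank ℝ V) * μ (ball 0 1) * ENNReal.ofReal (r ^ s) := by
  rw [addHaar_closedBall μ x (by positivity), ← mul_assoc, ← ENNReal.ofReal_mul (by positivity),
    mul_right_comm _ (μ _), ← ENNReal.ofReal_mul (by positivity),
    Real.rpow_sub_natCast hr.ne', mul_pow]
  congr 2
  field_simp

theorem exists_measure_rpow_mul_addHaar_le (hs : 0 < s) {E : Set V} (hE : μH[s] E = 0)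
    (hR : 0 < R) {ε : ℝ≥0∞} (hε : ε ≠ 0) :
    ∃ ν : Measure V, ν univ ≤ ε ∧ ∀ c ∈ E, ∃ n : ℕ, ∀ Q ⊆ closedBall c (R / 2 ^ n),
      ENNReal.ofReal ((R / 2 ^ n) ^ (s - finrank ℝ V)) * μ Q ≤ ν Q := by
  let K : ℝ≥0∞ := ENNReal.ofReal (2 ^ s * 3 ^ finrank ℝ V) * μ (ball 0 1)
  have hK : K ≠ ∞ := by finiteness
  have hη : min (ε / K) (ENNReal.ofReal (R ^ s)) ≠ 0 := by
    simp [min_eq_zero, hε, hK, Real.rpow_pos_of_pos hR]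
  obtain ⟨x, r, hr, hcover, hsum⟩ := exists_cover_closedBall_tsum_rpow_le hs hE hη
  have hrR (i : ℕ) : r i ≤ R := by
    have := ((ENNReal.le_tsum i).trans hsum).trans (min_le_right _ _)
    rwa [ENNReal.ofReal_le_ofReal_iff (by positivity),
      Real.rpow_le_rpow_iff (hr i).le hR.le hs] at this
  let ν : Measure V := Measure.sum fun i =>
    ENNReal.ofReal (2 ^ s * r i ^ (s - finrank ℝ V)) • μ.restrict (closedBall (x i) (3 * r i))
  refine ⟨ν, ?_, fun c hc => ?_⟩
  · calc ν univ = ∑' i, K * ENNReal.ofReal (r i ^ s) := by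
          simp only [ν, sum_apply _ MeasurableSet.univ, Measure.smul_apply, restrict_apply_univ,
            smul_eq_mul, ofReal_rpow_mul_addHaar_closedBall μ _ (hr _), K]
      _ = K * ∑' i, ENNReal.ofReal (r i ^ s) := ENNReal.tsum_mul_left
      _ ≤ K * (ε / K) := mul_le_mul_right (hsum.trans (min_le_left _ _)) _
      _ ≤ ε := ENNReal.mul_div_le
  · obtain ⟨i, hci⟩ := mem_iUnion.1 (hcover hc)
    obtain ⟨n, hrn, hnr⟩ := exists_nat_le_div_two_pow_le (hr i) (hrR i)
    refine ⟨n, fun Q hQ => ?_⟩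
    have hball : closedBall c (R / 2 ^ n) ⊆ closedBall (x i) (3 * r i) :=
      closedBall_subset_closedBall' (by linarith [mem_closedBall.1 hci])
    calc ENNReal.ofReal ((R / 2 ^ n) ^ (s - finrank ℝ V)) * μ Q
        ≤ ENNReal.ofReal (2 ^ s * r i ^ (s - finrank ℝ V)) * μ Q := by
          gcongr
          exact rpow_sub_natCast_le_of_le_of_le hs.le _ (hr i) hrn hnr
      _ = (ENNReal.ofReal (2 ^ s * r i ^ (s - finrank ℝ V)) •
            μ.restrict (closedBall (x i) (3 * r i))) Q := by
          rw [Measure.smul_apply, restrict_eq_self _ (hQ.trans hball), smul_eq_mul]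
      _ ≤ ν Q := le_sum _ i Q

end GaugeMeasure

section DenseDifferentiability

variable {𝕜 V F : Type*} [NontriviallyNormedField 𝕜] [NormedAddCommGroup V] [NormedSpace 𝕜 V]
  [NormedAddCommGroup F] [NormedSpace 𝕜 F]

theorem hasFDerivAt_of_hasFDerivWithinAt_diff {f : V → F} {f' : V →L[𝕜] F} {U E : Set V} {x : V}
    (hU : IsOpen U) (hE : Dense Eᶜ) (hf : ContinuousOn f U) (hx : x ∈ U)
    (h : HasFDerivWithinAt f f' (U \ E) x) : HasFDerivAt f f' x := by
  rw [hasFDerivWithinAt_iff_isLittleO, Asymptotics.isLittleO_iff] at h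
  rw [hasFDerivAt_iff_isLittleO, Asymptotics.isLittleO_iff]
  intro ε hε
  obtain ⟨W, hW, hxW, hWε⟩ := mem_nhdsWithin.1 (h hε)
  have hWU : IsOpen (W ∩ U) := hW.inter hU
  filter_upwards [hWU.mem_nhds ⟨hxW, hx⟩] with y hy
  have hfy : ContinuousWithinAt f (W ∩ U ∩ Eᶜ) y :=
    (hf y hy.2).mono fun _ hz => hz.1.2
  exact ContinuousWithinAt.closure_le (hE.open_subset_closure_inter hWU hy)
    (f := fun y => ‖f y - f x - f' (y - x)‖) (g := fun y => ε * ‖y - x‖)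
    (by fun_prop) (by fun_prop) fun z hz => hWε ⟨hz.1.1, hz.1.2, hz.2⟩

end DenseDifferentiability

lemma dense_compl_of_hausdorffMeasure_eq_zero {V : Type*} [NormedAddCommGroup V]
    [NormedSpace ℝ V] [FiniteDimensional ℝ V] [MeasurableSpace V] [BorelSpace V] {s : ℝ}
    (hs : s ≤ finrank ℝ V) {E : Set V} (hE : μH[s] E = 0) : Dense Eᶜ := by
  rw [← interior_eq_empty_iff_dense_compl]
  exact interior_eq_empty_of_null (μ := μH[(finrank ℝ V : ℝ)])
    (le_antisymm ((hausdorffMeasure_mono hs E).trans_eq hE) zero_le)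

lemma holderOnWith_of_dist_le {X Y : Type*} [PseudoMetricSpace X] [PseudoMetricSpace Y]
    {C α : ℝ≥0} {f : X → Y} {U : Set X}
    (hf : ∀ x ∈ U, ∀ y ∈ U, dist (f x) (f y) ≤ C * dist x y ^ (α : ℝ)) :
    HolderOnWith C α f U := fun x hx y hy => by
  rw [edist_dist, edist_dist, ENNReal.ofReal_rpow_of_nonneg dist_nonneg α.coe_nonneg,
    ← ENNReal.ofReal_coe_nnreal, ← ENNReal.ofReal_mul C.coe_nonneg]
  exact ENNReal.ofReal_le_ofReal (hf x hx y hy)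

/-! ### Removability -/

section Vanishing

variable {F : Type*} [NormedAddCommGroup F] [NormedSpace ℂ F] {f : ℂ → F} {z w : ℂ} {E : Set ℂ}
  {C α : ℝ≥0}

/-- The ratio of the square of the diagonal to the area, for the rectangle with opposite corners
`z` and `w`; junk value `0` for a degenerate rectangle. -/
noncomputable def eccentricity (z w : ℂ) : ℝ≥0∞ :=
  ENNReal.ofReal (‖w - z‖ ^ 2 / (|(w - z).re| * |(w - z).im|))

lemma ofReal_norm_sq_eq_eccentricity_mul_volume (hre : z.re ≠ w.re) (him : z.im ≠ w.im) {n : ℕ}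
    {a b : ℂ} (hab : b - a = (w - z) / 2 ^ n) :
    ENNReal.ofReal (‖b - a‖ ^ 2) = eccentricity z w * volume (halfOpenRectangle a b) := by
  have hre' : |(w - z).re| ≠ 0 := abs_ne_zero.2 (sub_ne_zero.2 hre.symm)
  have him' : |(w - z).im| ≠ 0 := abs_ne_zero.2 (sub_ne_zero.2 him.symm)
  have hab' : b - a = (w - z) / (2 ^ n : ℝ) := by rw [hab]; push_cast; rfl
  rw [eccentricity, volume_halfOpenRectangle, ← ENNReal.ofReal_mul (by positivity), hab',
    div_ofReal_re, div_ofReal_im, norm_div, abs_div, abs_div, norm_real, Real.norm_eq_abs]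
  congr 1
  field_simp

lemma exists_enorm_rectangleIntegral_le_mul_sq {x : ℂ} (hf : DifferentiableAt ℂ f x) {ε : ℝ≥0}
    (hε : 0 < ε) (z w : ℂ) :
    ∃ n : ℕ, ∀ a b, x ∈ Rectangle a b → ContinuousOn f (Rectangle a b) →
      b - a = (w - z) / 2 ^ n →
        ‖rectangleIntegral f a b‖ₑ ≤ ε * ENNReal.ofReal (‖b - a‖ ^ 2) := by
  obtain ⟨δ, hδ, hsmall⟩ := exists_norm_rectangleIntegral_le_mul_sq hf (NNReal.coe_pos.2 hε)
  obtain ⟨n, hn⟩ := pow_unbounded_of_one_lt (‖w - z‖ / δ) one_lt_two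
  refine ⟨n, fun a b hx hcont hab => ?_⟩
  have hlt : ‖b - a‖ < δ := by
    rw [hab, norm_div, norm_pow, norm_ofNat]
    exact (div_lt_comm₀ hδ (by positivity)).1 hn
  rw [← ofReal_norm, ← ENNReal.ofReal_coe_nnreal, ← ENNReal.ofReal_mul ε.coe_nonneg]
  exact ENNReal.ofReal_le_ofReal (hsmall a b hx hcont hlt)

lemma enorm_rectangleIntegral_le_of_holderOnWith (hα : 0 < α)
    (hf : HolderOnWith C α f (Rectangle z w)) (hzw : z ≠ w) :
    ‖rectangleIntegral f z w‖ₑ ≤ 4 * C * (ENNReal.ofReal (‖w - z‖ ^ (1 + α - 2 : ℝ)) *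
      ENNReal.ofReal (‖w - z‖ ^ 2)) := by
  have hpos : 0 < ‖w - z‖ := norm_pos_iff.2 (sub_ne_zero.2 hzw.symm)
  rw [← ofReal_norm, ← ENNReal.ofReal_mul (by positivity), ← ENNReal.ofReal_coe_nnreal,
    ← ENNReal.ofReal_ofNat, ← ENNReal.ofReal_mul (by positivity),
    ← ENNReal.ofReal_mul (by positivity)]
  refine ENNReal.ofReal_le_ofReal ((norm_rectangleIntegral_le_of_holderOnWith hα hf).trans_eq ?_)
  rw [← Real.rpow_natCast, ← Real.rpow_add hpos, Nat.cast_ofNat, sub_add_cancel,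
    Real.rpow_add hpos, Real.rpow_one]
  ring

lemma exists_measure_enorm_rectangleIntegral_le (hα : 0 < α) (hE : μH[1 + α] E = 0)
    (hf : HolderOnWith C α f (Rectangle z w)) (hre : z.re ≠ w.re) (him : z.im ≠ w.im)
    {ε : ℝ≥0∞} (hε : ε ≠ 0) :
    ∃ γ : Measure ℂ, γ univ ≤ ε ∧ ∀ x ∈ E, ∃ n : ℕ, ∀ a b, x ∈ Rectangle a b →
      Rectangle a b ⊆ Rectangle z w → b - a = (w - z) / 2 ^ n →
        ‖rectangleIntegral f a b‖ₑ ≤ eccentricity z w * (4 * C * γ (halfOpenRectangle a b)) := by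
  have hzw : w - z ≠ 0 := sub_ne_zero.2 fun h => hre (h ▸ rfl)
  obtain ⟨γ, hγ, hγE⟩ := exists_measure_rpow_mul_addHaar_le (volume : Measure ℂ)
    (show (0 : ℝ) < 1 + α by positivity) hE (norm_pos_iff.2 hzw) hε
  rw [finrank_real_complex, Nat.cast_ofNat] at hγE
  refine ⟨γ, hγ, fun x hx => (hγE x hx).imp fun n hn a b hxab hsub hab => ?_⟩
  have hne : a ≠ b := (sub_ne_zero.1 (hab ▸ div_ne_zero hzw (pow_ne_zero n two_ne_zero))).symm
  have hnorm : ‖b - a‖ = ‖w - z‖ / 2 ^ n := by rw [hab, norm_div, norm_pow, norm_ofNat]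
  have hball : halfOpenRectangle a b ⊆ closedBall x (‖w - z‖ / 2 ^ n) :=
    (halfOpenRectangle_subset_rectangle a b).trans (hnorm ▸ rectangle_subset_closedBall hxab)
  calc ‖rectangleIntegral f a b‖ₑ
      ≤ 4 * C * (ENNReal.ofReal (‖b - a‖ ^ (1 + α - 2 : ℝ)) * ENNReal.ofReal (‖b - a‖ ^ 2)) :=
        enorm_rectangleIntegral_le_of_holderOnWith hα (hf.mono hsub) hne
    _ = eccentricity z w * (4 * C * (ENNReal.ofReal (‖b - a‖ ^ (1 + α - 2 : ℝ)) *
          volume (halfOpenRectangle a b))) := by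
        rw [ofReal_norm_sq_eq_eccentricity_mul_volume hre him hab]
        ring
    _ ≤ eccentricity z w * (4 * C * γ (halfOpenRectangle a b)) := by
        rw [hnorm]
        gcongr
        exact hn _ hball

theorem enorm_rectangleIntegral_le_mul (hα : 0 < α) (hE : μH[1 + α] E = 0)
    (hf : HolderOnWith C α f (Rectangle z w))
    (hd : ∀ x ∈ Rectangle z w \ E, DifferentiableAt ℂ f x) (hre : z.re ≠ w.re)
    (him : z.im ≠ w.im) {ε : ℝ≥0} (hε : 0 < ε) :
    ‖rectangleIntegral f z w‖ₑ ≤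
      ε * (eccentricity z w * (volume (halfOpenRectangle z w) + 4 * C)) := by
  have hcont : ContinuousOn f (Rectangle z w) := hf.continuousOn hα
  obtain ⟨γ, hγ, hγE⟩ := exists_measure_enorm_rectangleIntegral_le hα hE hf hre him
    (ENNReal.coe_ne_zero.2 hε.ne')
  let ν : Measure ℂ := eccentricity z w • ((ε : ℝ≥0∞) • volume + (4 * C : ℝ≥0∞) • γ)
  have hν (Q : Set ℂ) : ν Q = eccentricity z w * (ε * volume Q + 4 * C * γ Q) := rfl
  have hloc : ∀ x ∈ Rectangle z w, ∃ n : ℕ, ∀ a b, x ∈ Rectangle a b →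
      Rectangle a b ⊆ Rectangle z w → b - a = (w - z) / 2 ^ n →
        ‖rectangleIntegral f a b‖ₑ ≤ ν (halfOpenRectangle a b) := by
    intro x hx
    by_cases hxE : x ∈ E
    · refine (hγE x hxE).imp fun n hn a b hxab hsub hab => (hn a b hxab hsub hab).trans ?_
      rw [hν]
      gcongr
      exact le_add_self
    · refine (exists_enorm_rectangleIntegral_le_mul_sq (hd x ⟨hx, hxE⟩) hε z w).imp
        fun n hn a b hxab hsub hab => (hn a b hxab (hcont.mono hsub) hab).trans ?_
      rw [hν, ofReal_norm_sq_eq_eccentricity_mul_volume hre him hab, mul_left_comm]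
      gcongr
      exact le_self_add
  calc ‖rectangleIntegral f z w‖ₑ ≤ ν (halfOpenRectangle z w) :=
        enorm_rectangleIntegral_le_measure hcont hloc
    _ ≤ eccentricity z w * (ε * volume (halfOpenRectangle z w) + 4 * C * ε) := by
        rw [hν]
        gcongr
        exact (measure_mono (subset_univ _)).trans hγ
    _ = ε * (eccentricity z w * (volume (halfOpenRectangle z w) + 4 * C)) := by ring

theorem rectangleIntegral_eq_zero_of_holderOnWith (hα : 0 < α) (hE : μH[1 + α] E = 0)
    (hf : HolderOnWith C α f (Rectangle z w))
    (hd : ∀ x ∈ Rectangle z w \ E, DifferentiableAt ℂ f x) :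
    rectangleIntegral f z w = 0 := by
  by_cases hre : z.re = w.re
  · exact rectangleIntegral_eq_zero_of_re_eq f hre
  by_cases him : z.im = w.im
  · exact rectangleIntegral_eq_zero_of_im_eq f him
  have hfin : eccentricity z w * (volume (halfOpenRectangle z w) + 4 * C) ≠ ∞ := by
    rw [eccentricity, volume_halfOpenRectangle]
    finiteness
  by_contra hne
  obtain ⟨ε, hε, hlt⟩ := ENNReal.exists_nnreal_pos_mul_lt hfin (enorm_ne_zero.2 hne)
  exact hlt.not_ge (enorm_rectangleIntegral_le_mul hα hE hf hd hre him hε)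

end Vanishing

theorem differentiableOn_of_holderOnWith {F : Type*} [NormedAddCommGroup F] [NormedSpace ℂ F]
    [CompleteSpace F] {C α : ℝ≥0} (hα : 0 < α) {U : Set ℂ} (hU : IsOpen U) {E : Set ℂ}
    (hE : μH[1 + α] E = 0) {f : ℂ → F} (hf : HolderOnWith C α f U)
    (hd : ∀ x ∈ U \ E, DifferentiableAt ℂ f x) : DifferentiableOn ℂ f U := by
  refine (isConservativeOn_and_continuousOn_iff_isDifferentiableOn hU).1
    ⟨isConservativeOn_iff_rectangleIntegral_eq_zero.2 fun z w hzw => ?_, hf.continuousOn hα⟩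
  exact rectangleIntegral_eq_zero_of_holderOnWith hα hE (hf.mono hzw)
    fun x hx => hd x ⟨hzw hx.1, hx.2⟩

end HolderRemovability

open HolderRemovability in
theorem stmt_11_general {F : Type*} [NormedAddCommGroup F] [NormedSpace ℂ F] [CompleteSpace F]
    {C α : ℝ≥0} (hα : 0 < α) {U : Set ℂ} (hU : IsOpen U) {E : Set ℂ} (hE : μH[1 + α] E = 0)
    {f : ℂ → F} (hf : HolderOnWith C α f U) (hd : DifferentiableOn ℂ f (U \ E)) :
    DifferentiableOn ℂ f U := by
  obtain hα1 | hα1 := le_or_gt α 1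
  · have hdense : Dense Eᶜ := dense_compl_of_hausdorffMeasure_eq_zero (by
      rw [finrank_real_complex]
      norm_cast
      linarith) hE
    exact differentiableOn_of_holderOnWith hα hU hE hf fun x hx =>
      (hasFDerivAt_of_hasFDerivWithinAt_diff hU hdense (hf.continuousOn hα) hx.1
        (hd x hx).hasFDerivWithinAt).differentiableAt
  · have huniv : μH[1 + α] (univ : Set ℂ) = 0 := by
      rw [← NNReal.coe_one, ← NNReal.coe_add]
      refine hausdorffMeasure_of_dimH_lt ?_
      rw [Real.dimH_univ_eq_finrank, finrank_real_complex]
      norm_cast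
      linarith
    exact differentiableOn_of_holderOnWith hα hU huniv hf (by simp)

/-- Sets of zero `(1+α)`-dimensional Hausdorff measure are removable for functions
that are Hölder continuous of exponent `α` on `U` and holomorphic off the set. -/
theorem stmt_11 (α : ℝ) (hα0 : 0 < α) (hα1 : α < 1)
    (U : Set ℂ) (hU : IsOpen U) (E : Set ℂ)
    (hE : MeasureTheory.Measure.hausdorffMeasure (1 + α) E = 0) (f : ℂ → ℂ)
    (hf : ∃ C : ℝ, 0 ≤ C ∧ ∀ x ∈ U, ∀ y ∈ U, ‖f x - f y‖ ≤ C * ‖x - y‖ ^ α)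
    (hd : DifferentiableOn ℂ f (U \ E)) :
    DifferentiableOn ℂ f U := by
  obtain ⟨C, hC, hf⟩ := hf
  lift C to ℝ≥0 using hC
  lift α to ℝ≥0 using hα0.le
  simp only [← dist_eq_norm] at hf
  exact stmt_11_general (NNReal.coe_pos.1 hα0) hU hE
    (HolderRemovability.holderOnWith_of_dist_le hf) hd
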